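/- For every a ≥ 1.032695, the first Dirichlet biharmonic eigenvalue of the rectangle R_a is strictly larger than that of the unit square: λ₁(a) > λ₁(1). Consequently any minimiser of λ₁ among rectangles of unit area lies in [1, 1.032695). -/

import Mathlib

open MeasureTheory Real Filter

noncomputable section

/-- Directional (partial) derivative of `u : ℝ × ℝ → ℝ` in direction `v`. -/
def pd (v : ℝ × ℝ) (u : ℝ × ℝ → ℝ) : ℝ × ℝ → ℝ := fun p => fderiv ℝ u p v

/-- Second partial derivative `∂²u/∂x²`. -/
def uxx (u : ℝ × ℝ → ℝ) : ℝ × ℝ → ℝ := pd (1, 0) (pd (1, 0) u)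

/-- Second partial derivative `∂²u/∂y²`. -/
def uyy (u : ℝ × ℝ → ℝ) : ℝ × ℝ → ℝ := pd (0, 1) (pd (0, 1) u)

/-- Mixed second partial derivative `∂²u/∂x∂y`. -/
def uxy (u : ℝ × ℝ → ℝ) : ℝ × ℝ → ℝ := pd (0, 1) (pd (1, 0) u)

/-- The Laplacian `Δu = u_xx + u_yy`. -/
def lap (u : ℝ × ℝ → ℝ) : ℝ × ℝ → ℝ := fun p => uxx u p + uyy u p

/-- The open rectangle `R_a = (0,a) × (0,1/a)` of unit area. -/
def Rect (a : ℝ) : Set (ℝ × ℝ) := Set.Ioo 0 a ×ˢ Set.Ioo 0 (1 / a)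

/-- Admissible test functions: smooth, compactly supported inside `Ω`. -/
def Adm (Ω : Set (ℝ × ℝ)) (u : ℝ × ℝ → ℝ) : Prop :=
  ContDiff ℝ (⊤ : ℕ∞) u ∧ HasCompactSupport u ∧ tsupport u ⊆ Ω

/-- First Dirichlet eigenvalue of the biharmonic operator on `R_a`,
characterized variationally as the infimum of the Rayleigh quotient. -/
def lam1 (a : ℝ) : ℝ :=
  sInf { μ | ∃ u : ℝ × ℝ → ℝ, Adm (Rect a) u ∧ u ≠ 0 ∧
    μ = (∫ p, (lap u p) ^ 2) / (∫ p, (u p) ^ 2) }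

/-- If `q` vanishes outside `[l, r]` and an antiderivative of `q` plus a term `G` vanishing at the
endpoints is nondecreasing on `[l, r]`, then `q` has nonnegative integral. -/
theorem integral_nonneg_of_add_deriv_nonneg {q G G' : ℝ → ℝ} {l r : ℝ} (hlr : l ≤ r)
    (hq : Continuous q) (hq0 : ∀ x, x ∉ Set.Icc l r → q x = 0)
    (hG : ∀ x ∈ Set.Icc l r, HasDerivAt G (G' x) x) (hl : G l = 0) (hr : G r = 0)
    (hnn : ∀ x ∈ Set.Icc l r, 0 ≤ q x + G' x) : 0 ≤ ∫ x, q x := by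
  have hK : ∀ x ∈ Set.Icc l r,
      HasDerivAt (fun x => (∫ t in l..x, q t) + G x) (q x + G' x) x := fun x hx =>
    (intervalIntegral.integral_hasDerivAt_right (hq.intervalIntegrable _ _)
      (hq.stronglyMeasurableAtFilter _ _) hq.continuousAt).add (hG x hx)
  have hmono : MonotoneOn (fun x => (∫ t in l..x, q t) + G x) (Set.Icc l r) := by
    apply monotoneOn_of_deriv_nonneg (convex_Icc l r)
    · exact fun x hx => (hK x hx).continuousAt.continuousWithinAt
    · intro x hx
      exact (hK x (interior_subset hx)).differentiableAt.differentiableWithinAt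
    · intro x hx
      rw [(hK x (interior_subset hx)).deriv]
      exact hnn x (interior_subset hx)
  have h := hmono (Set.left_mem_Icc.2 hlr) (Set.right_mem_Icc.2 hlr) hlr
  simp only [intervalIntegral.integral_same, hl, hr, add_zero] at h
  rwa [intervalIntegral.integral_of_le hlr, ← integral_Icc_eq_integral_Ioc,
    setIntegral_eq_integral_of_forall_compl_eq_zero hq0] at h

/-- The Wirtinger inequality on `(0, 1)`. -/
theorem wirtinger {f f₁ : ℝ → ℝ} {l r : ℝ} (hl : 0 < l) (hlr : l ≤ r) (hr : r < 1)
    (hf : ∀ x, HasDerivAt f (f₁ x) x) (hf₁ : Continuous f₁)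
    (h0 : ∀ x, x ∉ Set.Ioo l r → f x = 0) (h1 : ∀ x, x ∉ Set.Ioo l r → f₁ x = 0) :
    0 ≤ ∫ x, (f₁ x ^ 2 - π ^ 2 * f x ^ 2) := by
  have hfc : Continuous f := continuous_iff_continuousAt.2 fun x => (hf x).continuousAt
  have hs : ∀ x ∈ Set.Icc l r, 0 < sin (π * x) := fun x hx =>
    sin_pos_of_pos_of_lt_pi (mul_pos pi_pos (hl.trans_le hx.1))
      (by nlinarith [pi_pos, hx.2.trans_lt hr])
  apply integral_nonneg_of_add_deriv_nonneg hlr (by fun_prop)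
    (G := fun x => -(π * cos (π * x) * f x ^ 2 / sin (π * x)))
    (G' := fun x => (f₁ x - π * cos (π * x) / sin (π * x) * f x) ^ 2
      - (f₁ x ^ 2 - π ^ 2 * f x ^ 2))
  · intro x hx
    have hx' : x ∉ Set.Ioo l r := fun h => hx (Set.Ioo_subset_Icc_self h)
    simp [h0 x hx', h1 x hx']
  · intro x hx
    have hpx : HasDerivAt (fun x : ℝ => π * x) π x := by
      simpa using (hasDerivAt_id x).const_mul π
    refine ((((hpx.cos).const_mul π).mul ((hf x).pow 2)).div hpx.sin
      (hs x hx).ne').neg.congr_deriv ?_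
    have := (hs x hx).ne'
    simp only [Pi.mul_apply, Pi.pow_apply]
    field_simp
    ring
  · simp [h0 l (by simp)]
  · simp [h0 r (by simp)]
  · intro x _
    simp only [add_sub_cancel]
    positivity

/-- The Wronskian (up to a constant factor) of the solutions of
`u'''' - (α² - β²) u'' = α² β² u` with a double zero at the origin. -/
def beamW (α β x : ℝ) : ℝ :=
  2 * α * β * (1 - cosh (α * x) * cos (β * x)) + (α ^ 2 - β ^ 2) * (sinh (α * x) * sin (β * x))

def beamW' (α β x : ℝ) : ℝ :=
  (α ^ 2 + β ^ 2) * (α * (cosh (α * x) * sin (β * x)) - β * (sinh (α * x) * cos (β * x)))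

def beamV (α β x : ℝ) : ℝ :=
  α * β * (2 * α * β * (sinh (α * x) * sin (β * x))
    - (α ^ 2 - β ^ 2) * (1 - cosh (α * x) * cos (β * x)))

def beamV' (α β x : ℝ) : ℝ :=
  α * β * (2 * α * β * (α * (cosh (α * x) * sin (β * x)) + β * (sinh (α * x) * cos (β * x)))
    + (α ^ 2 - β ^ 2) * (α * (sinh (α * x) * cos (β * x)) - β * (cosh (α * x) * sin (β * x))))

section Beam

variable (α β x : ℝ)

theorem hasDerivAt_cosh_mul : HasDerivAt (fun x => cosh (α * x)) (α * sinh (α * x)) x := by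
  simpa [mul_comm] using ((hasDerivAt_id x).const_mul α).cosh

theorem hasDerivAt_sinh_mul : HasDerivAt (fun x => sinh (α * x)) (α * cosh (α * x)) x := by
  simpa [mul_comm] using ((hasDerivAt_id x).const_mul α).sinh

theorem hasDerivAt_cos_mul : HasDerivAt (fun x => cos (β * x)) (-(β * sin (β * x))) x := by
  simpa [mul_comm] using ((hasDerivAt_id x).const_mul β).cos

theorem hasDerivAt_sin_mul : HasDerivAt (fun x => sin (β * x)) (β * cos (β * x)) x := by
  simpa [mul_comm] using ((hasDerivAt_id x).const_mul β).sin

theorem hasDerivAt_beamW : HasDerivAt (beamW α β) (beamW' α β x) x := by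
  have h := ((((hasDerivAt_cosh_mul α x).mul (hasDerivAt_cos_mul β x)).const_sub 1).const_mul
    (2 * α * β)).add (((hasDerivAt_sinh_mul α x).mul (hasDerivAt_sin_mul β x)).const_mul
    (α ^ 2 - β ^ 2))
  refine h.congr_deriv ?_
  simp only [beamW']
  ring

theorem hasDerivAt_beamW' : HasDerivAt (beamW' α β)
    ((α ^ 2 + β ^ 2) ^ 2 * (sinh (α * x) * sin (β * x))) x := by
  have h := ((((hasDerivAt_cosh_mul α x).mul (hasDerivAt_sin_mul β x)).const_mul α).sub
    (((hasDerivAt_sinh_mul α x).mul (hasDerivAt_cos_mul β x)).const_mul β)).const_mul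
    (α ^ 2 + β ^ 2)
  refine h.congr_deriv ?_
  ring

theorem hasDerivAt_beamV : HasDerivAt (beamV α β) (beamV' α β x) x := by
  have h := ((((hasDerivAt_sinh_mul α x).mul (hasDerivAt_sin_mul β x)).const_mul
    (2 * α * β)).sub ((((hasDerivAt_cosh_mul α x).mul (hasDerivAt_cos_mul β x)).const_sub
    1).const_mul (α ^ 2 - β ^ 2))).const_mul (α * β)
  refine h.congr_deriv ?_
  simp only [beamV']
  ring

theorem hasDerivAt_beamV' : HasDerivAt (beamV' α β)
    (α * β * (α ^ 2 + β ^ 2) ^ 2 * (cosh (α * x) * cos (β * x))) x := by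
  have h := (((((hasDerivAt_cosh_mul α x).mul (hasDerivAt_sin_mul β x)).const_mul α).add
    (((hasDerivAt_sinh_mul α x).mul (hasDerivAt_cos_mul β x)).const_mul β)).const_mul
    (2 * α * β)).add (((((hasDerivAt_sinh_mul α x).mul (hasDerivAt_cos_mul β x)).const_mul
    α).sub (((hasDerivAt_cosh_mul α x).mul (hasDerivAt_sin_mul β x)).const_mul β)).const_mul
    (α ^ 2 - β ^ 2))
  refine (h.const_mul (α * β)).congr_deriv ?_
  ring

variable {α β x}

theorem beamW'_pos (hα : 0 < α) (hβ : 0 < β) (hx : 0 < x) (hx' : β * x ≤ π) :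
    0 < beamW' α β x := by
  have hmono : StrictMonoOn (beamW' α β) (Set.Icc 0 x) := by
    apply strictMonoOn_of_deriv_pos (convex_Icc 0 x)
    · exact fun y _ => (hasDerivAt_beamW' α β y).continuousAt.continuousWithinAt
    · intro y hy
      rw [interior_Icc] at hy
      rw [(hasDerivAt_beamW' α β y).deriv]
      have h1 : 0 < sinh (α * y) := sinh_pos_iff.2 (mul_pos hα hy.1)
      have h2 : 0 < sin (β * y) := sin_pos_of_pos_of_lt_pi (mul_pos hβ hy.1)
        ((mul_lt_mul_of_pos_left hy.2 hβ).trans_le hx')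
      positivity
  simpa [beamW'] using hmono (Set.left_mem_Icc.2 hx.le) (Set.right_mem_Icc.2 hx.le) hx

theorem beamW_pos_of_mul_le_pi (hα : 0 < α) (hβ : 0 < β) (hx : 0 < x) (hx' : β * x ≤ π) :
    0 < beamW α β x := by
  have hmono : StrictMonoOn (beamW α β) (Set.Icc 0 x) := by
    apply strictMonoOn_of_deriv_pos (convex_Icc 0 x)
    · exact fun y _ => (hasDerivAt_beamW α β y).continuousAt.continuousWithinAt
    · intro y hy
      rw [interior_Icc] at hy
      rw [(hasDerivAt_beamW α β y).deriv]
      exact beamW'_pos hα hβ hy.1 ((mul_le_mul_of_nonneg_left hy.2.le hβ.le).trans hx')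
  simpa [beamW] using hmono (Set.left_mem_Icc.2 hx.le) (Set.right_mem_Icc.2 hx.le) hx

theorem beamW_pos (hα : 0 < α) (hβ : 0 < β) (hβπ : π ≤ β) (hβ2π : β ≤ 2 * π)
    (h1 : 0 < beamW α β 1) (hx : 0 < x) (hx1 : x ≤ 1) : 0 < beamW α β x := by
  rcases le_or_gt (β * x) π with h | h
  · exact beamW_pos_of_mul_le_pi hα hβ hx h
  have hconc : ConcaveOn ℝ (Set.Icc (π / β) 1) (beamW α β) := by
    apply concaveOn_of_hasDerivWithinAt2_nonpos (convex_Icc _ _) (f' := beamW' α β)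
      (f'' := fun y => (α ^ 2 + β ^ 2) ^ 2 * (sinh (α * y) * sin (β * y)))
    · exact fun y _ => (hasDerivAt_beamW α β y).continuousAt.continuousWithinAt
    · exact fun y _ => (hasDerivAt_beamW α β y).hasDerivWithinAt
    · exact fun y _ => (hasDerivAt_beamW' α β y).hasDerivWithinAt
    · intro y hy
      rw [interior_Icc] at hy
      have hy1 : π < β * y := by
        have := (div_lt_iff₀ hβ).1 hy.1
        linarith
      have hy0 : 0 < y := by
        have := div_pos pi_pos hβ
        linarith [hy.1]
      have hs : 0 ≤ sinh (α * y) := sinh_nonneg_iff.2 (mul_pos hα hy0).le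
      have hs' : 0 ≤ sin (β * y - π) := sin_nonneg_of_nonneg_of_le_pi (by linarith)
        (by nlinarith [hy.2])
      rw [sin_sub_pi] at hs'
      exact mul_nonpos_of_nonneg_of_nonpos (by positivity)
        (mul_nonpos_of_nonneg_of_nonpos hs (by linarith))
  have hπβ : π / β ≤ 1 := (div_le_one hβ).2 hβπ
  have h0 : 0 < beamW α β (π / β) := beamW_pos_of_mul_le_pi hα hβ (div_pos pi_pos hβ)
    (mul_div_cancel₀ _ hβ.ne').le
  have hmem : x ∈ Set.Icc (π / β) 1 := ⟨(div_le_iff₀ hβ).2 (by linarith), hx1⟩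
  have := hconc.min_le_of_mem_Icc (Set.left_mem_Icc.2 hπβ) (Set.right_mem_Icc.2 hπβ) hmem
  exact (lt_min h0 h1).trans_le this

/-- Lower bound for the clamped beam under tension `α² - β²`, as long as the associated Wronskian
is positive on `(0, 1)`. -/
theorem clamped_beam {f f₁ f₂ : ℝ → ℝ} {l r : ℝ} (hl : 0 < l) (hlr : l ≤ r) (hr : r < 1)
    (hf : ∀ x, HasDerivAt f (f₁ x) x) (hf₁ : ∀ x, HasDerivAt f₁ (f₂ x) x) (hf₂ : Continuous f₂)
    (h0 : ∀ x, x ∉ Set.Ioo l r → f x = 0) (h1 : ∀ x, x ∉ Set.Ioo l r → f₁ x = 0)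
    (h2 : ∀ x, x ∉ Set.Ioo l r → f₂ x = 0)
    (hW : ∀ x, 0 < x → x ≤ 1 → 0 < beamW α β x) :
    0 ≤ ∫ x, (f₂ x ^ 2 + (α ^ 2 - β ^ 2) * f₁ x ^ 2 - α ^ 2 * β ^ 2 * f x ^ 2) := by
  have hfc : Continuous f := continuous_iff_continuousAt.2 fun x => (hf x).continuousAt
  have hfc₁ : Continuous f₁ := continuous_iff_continuousAt.2 fun x => (hf₁ x).continuousAt
  apply integral_nonneg_of_add_deriv_nonneg hlr (by fun_prop)
    (G := fun x => (-(beamW' α β x * f₁ x ^ 2) + 2 * (beamV α β x * (f x * f₁ x))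
      - beamV' α β x * f x ^ 2) / beamW α β x)
    (G' := fun x => (f₂ x - beamW' α β x / beamW α β x * f₁ x
      + beamV α β x / beamW α β x * f x) ^ 2
      - (f₂ x ^ 2 + (α ^ 2 - β ^ 2) * f₁ x ^ 2 - α ^ 2 * β ^ 2 * f x ^ 2))
  · intro x hx
    have hx' : x ∉ Set.Ioo l r := fun h => hx (Set.Ioo_subset_Icc_self h)
    simp [h0 x hx', h1 x hx', h2 x hx']
  · intro x hx
    have hWx : beamW α β x ≠ 0 := (hW x (hl.trans_le hx.1) (hx.2.trans hr.le)).ne'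
    have h := ((((hasDerivAt_beamW' α β x).mul ((hf₁ x).pow 2)).neg.add
      (((hasDerivAt_beamV α β x).mul ((hf x).mul (hf₁ x))).const_mul 2)).sub
      ((hasDerivAt_beamV' α β x).mul ((hf x).pow 2))).div (hasDerivAt_beamW α β x) hWx
    refine h.congr_deriv ?_
    have hcs := sin_sq_add_cos_sq (β * x)
    have hch := cosh_sq (α * x)
    set W := beamW α β x with hWdef
    set W₁ := beamW' α β x with hW₁def
    set V := beamV α β x with hVdef
    set V₁ := beamV' α β x with hV₁def
    set W₂ := (α ^ 2 + β ^ 2) ^ 2 * (sinh (α * x) * sin (β * x)) with hW₂def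
    set V₂ := α * β * (α ^ 2 + β ^ 2) ^ 2 * (cosh (α * x) * cos (β * x)) with hV₂def
    have e1 : (α ^ 2 - β ^ 2) * W - W₂ + 2 * V = 0 := by
      rw [hWdef, hW₂def, hVdef, beamW, beamV]
      ring
    have e2 : V ^ 2 = V₁ * W₁ - V₂ * W - α ^ 2 * β ^ 2 * W ^ 2 := by
      rw [hWdef, hW₁def, hVdef, hV₁def, hV₂def, beamW, beamW', beamV, beamV']
      linear_combination (-(α * β * (α ^ 2 + β ^ 2)) ^ 2) *
        ((cosh (α * x) ^ 2 - sinh (α * x) ^ 2) * hcs + hch)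
    simp only [Pi.mul_apply, Pi.pow_apply, Pi.add_apply, Pi.neg_apply, Pi.sub_apply]
    field_simp
    linear_combination (W * f₁ x ^ 2) * e1 - f x ^ 2 * e2
  · simp [h0 l (by simp), h1 l (by simp)]
  · simp [h0 r (by simp), h1 r (by simp)]
  · intro x _
    simp only [add_sub_cancel]
    positivity

end Beam

theorem beamW_one_pos : 0 < beamW 5.449 4.523 1 := by
  have hπ := pi_gt_d4
  have hπ' := pi_lt_d4
  set η : ℝ := 3 * π / 2 - 4.523 with hη
  have hη' : (4.523 * 1 : ℝ) = (π / 2 - η) + π := by rw [hη]; ring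
  have hη1 : 0.1892 < η := by rw [hη]; linarith
  have hη2 : η < 0.19 := by rw [hη]; linarith
  have hsin : 0.188 < sin η := by
    have h : η ^ 3 ≤ 0.19 ^ 3 := pow_le_pow_left₀ (by linarith) hη2.le 3
    have := sin_gt_sub_cube (x := η) (by linarith)
    norm_num at *
    linarith
  have h1 := sinh_lt_cosh 5.449
  have h2 : 0 < sinh 5.449 := sinh_pos_iff.2 (by norm_num)
  have h3 : 0.188 * sinh 5.449 ≤ cosh 5.449 * sin η := by
    rw [mul_comm]
    exact mul_le_mul h1.le hsin.le (by norm_num) (h2.trans h1).le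
  have h4 : sinh 5.449 * cos η ≤ sinh 5.449 := mul_le_of_le_one_right h2.le (cos_le_one η)
  rw [beamW, hη', sin_add_pi, cos_add_pi, sin_pi_div_two_sub, cos_pi_div_two_sub, mul_one]
  nlinarith

theorem beamW_pos_unit {x : ℝ} (hx : 0 < x) (hx1 : x ≤ 1) : 0 < beamW 5.449 4.523 x :=
  beamW_pos (by norm_num) (by norm_num) (by linarith [pi_lt_d4]) (by linarith [pi_gt_d4])
    beamW_one_pos hx hx1

section Adm

variable {Ω : Set (ℝ × ℝ)} {u v : ℝ × ℝ → ℝ}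

theorem ContDiff.pd (hu : ContDiff ℝ (⊤ : ℕ∞) u) (w : ℝ × ℝ) :
    ContDiff ℝ (⊤ : ℕ∞) (pd w u) :=
  (hu.fderiv_right (m := (⊤ : ℕ∞)) (by simp)).clm_apply contDiff_const

theorem pd_comm (hu : ContDiff ℝ (⊤ : ℕ∞) u) (w z : ℝ × ℝ) :
    pd w (pd z u) = pd z (pd w u) := by
  have key : ∀ (w z p : ℝ × ℝ), pd w (pd z u) p = fderiv ℝ (fderiv ℝ u) p w z := by
    intro w z p
    have hd : DifferentiableAt ℝ (fderiv ℝ u) p :=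
      (hu.fderiv_right (m := (⊤ : ℕ∞)) (by simp)).differentiable (by simp) p
    change fderiv ℝ (fun y => fderiv ℝ u y z) p w = _
    rw [fderiv_clm_apply hd (differentiableAt_const z)]
    simp
  ext p
  rw [key, key]
  exact hu.contDiffAt.isSymmSndFDerivAt
    (by simpa using WithTop.coe_le_coe.2 (le_top : (2 : ℕ∞) ≤ ⊤)) w z

namespace Adm

theorem continuous (hu : Adm Ω u) : Continuous u := hu.1.continuous

theorem differentiable (hu : Adm Ω u) : Differentiable ℝ u := hu.1.differentiable (by simp)

protected theorem pd (hu : Adm Ω u) (w : ℝ × ℝ) : Adm Ω (pd w u) :=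
  ⟨hu.1.pd w, hu.2.1.fderiv_apply ℝ w, (tsupport_fderiv_apply_subset ℝ w).trans hu.2.2⟩

protected theorem uxx (hu : Adm Ω u) : Adm Ω (uxx u) := (hu.pd _).pd _

protected theorem uxy (hu : Adm Ω u) : Adm Ω (uxy u) := (hu.pd _).pd _

protected theorem uyy (hu : Adm Ω u) : Adm Ω (uyy u) := (hu.pd _).pd _

theorem integrable_mul (hu : Adm Ω u) (hv : Adm Ω v) : Integrable fun p => u p * v p :=
  (hu.continuous.mul hv.continuous).integrable_of_hasCompactSupport hu.2.1.mul_right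

theorem integrable_sq (hu : Adm Ω u) : Integrable fun p => u p ^ 2 := by
  simpa only [sq] using hu.integrable_mul hu

theorem integral_mul_pd (hu : Adm Ω u) (hv : Adm Ω v) (w : ℝ × ℝ) :
    ∫ p, u p * pd w v p = -∫ p, pd w u p * v p :=
  integral_mul_fderiv_eq_neg_fderiv_mul_of_integrable ((hu.pd w).integrable_mul hv)
    (hu.integrable_mul (hv.pd w)) (hu.integrable_mul hv) (fun x _ => hu.differentiable x)
    (fun x _ => hv.differentiable x)

theorem integral_uxx_mul_uyy (hu : Adm Ω u) :
    ∫ p, uxx u p * uyy u p = ∫ p, uxy u p ^ 2 := by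
  have h1 := (hu.pd (1, 0)).integral_mul_pd hu.uyy (1, 0)
  have h2 := (hu.pd (1, 0)).integral_mul_pd hu.uxy (0, 1)
  have h3 : pd (1, 0) (uyy u) = pd (0, 1) (uxy u) := by
    simp only [uyy, uxy]
    rw [pd_comm (hu.pd (0, 1)).1, pd_comm hu.1]
  rw [h3, h2] at h1
  simp only [sq]
  exact (neg_injective h1).symm

theorem integral_lap_sq (hu : Adm Ω u) : ∫ p, lap u p ^ 2 =
    (∫ p, uxx u p ^ 2) + (∫ p, uyy u p ^ 2) + 2 * ∫ p, uxy u p ^ 2 := by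
  rw [← hu.integral_uxx_mul_uyy, ← integral_const_mul,
    ← integral_add hu.uxx.integrable_sq hu.uyy.integrable_sq,
    ← integral_add (f := fun p => uxx u p ^ 2 + uyy u p ^ 2)
      (hu.uxx.integrable_sq.add hu.uyy.integrable_sq)
      ((hu.uxx.integrable_mul hu.uyy).const_mul 2)]
  congr 1 with p
  simp only [lap]
  ring

theorem integral_sq_pos (hu : Adm Ω u) (h0 : u ≠ 0) : 0 < ∫ p, u p ^ 2 := by
  obtain ⟨p, hp⟩ := Function.ne_iff.1 h0
  exact (hu.continuous.pow 2).integral_pos_of_hasCompactSupport_nonneg_nonzero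
    (by simp only [sq]; exact hu.2.1.mul_right) (fun _ => sq_nonneg _) (x := p)
    (pow_ne_zero 2 hp)

end Adm

end Adm

/-- The area-preserving map `(x, y) ↦ (b x, y / b)`. -/
def squeeze (b : ℝ) (hb : b ≠ 0) : (ℝ × ℝ) ≃L[ℝ] ℝ × ℝ :=
  (ContinuousLinearEquiv.smulLeft (Units.mk0 b hb)).prodCongr
    (ContinuousLinearEquiv.smulLeft (Units.mk0 b hb)⁻¹)

section Squeeze

variable {b : ℝ} (hb : b ≠ 0)

@[simp]
theorem squeeze_apply (p : ℝ × ℝ) : squeeze b hb p = (b * p.1, b⁻¹ * p.2) := rfl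

theorem integral_comp_squeeze (φ : ℝ × ℝ → ℝ) : ∫ p, φ (squeeze b hb p) = ∫ p, φ p := by
  have hdet : LinearMap.det ((squeeze b hb : (ℝ × ℝ) →L[ℝ] ℝ × ℝ) : (ℝ × ℝ) →ₗ[ℝ] ℝ × ℝ) = 1 := by
    have : ((squeeze b hb : (ℝ × ℝ) →L[ℝ] ℝ × ℝ) : (ℝ × ℝ) →ₗ[ℝ] ℝ × ℝ) =
        (b • (LinearMap.id : ℝ →ₗ[ℝ] ℝ)).prodMap (b⁻¹ • (LinearMap.id : ℝ →ₗ[ℝ] ℝ)) := rfl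
    rw [this, LinearMap.det_prodMap]
    simp [hb]
  have hmp : MeasurePreserving (squeeze b hb) volume volume := by
    refine ⟨(squeeze b hb).continuous.measurable, ?_⟩
    have h := Measure.map_linearMap_addHaar_eq_smul_addHaar (volume : Measure (ℝ × ℝ))
      (hdet.trans_ne one_ne_zero)
    rw [hdet] at h
    simpa using h
  exact hmp.integral_comp (squeeze b hb).toHomeomorph.measurableEmbedding φ

theorem pd_comp_squeeze {u : ℝ × ℝ → ℝ} (hu : Differentiable ℝ u) (w p : ℝ × ℝ) :
    pd w (fun p => u (squeeze b hb p)) p = pd (squeeze b hb w) u (squeeze b hb p) := by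
  have h := (hu (squeeze b hb p)).hasFDerivAt.comp p (squeeze b hb).hasFDerivAt
  exact congrArg (fun L => L w) h.fderiv

theorem pd_fst_comp_squeeze {u : ℝ × ℝ → ℝ} (hu : Differentiable ℝ u) :
    pd (1, 0) (fun p => u (squeeze b hb p)) = fun p => b * pd (1, 0) u (squeeze b hb p) := by
  ext p
  rw [pd_comp_squeeze hb hu]
  have : squeeze b hb (1, 0) = b • ((1, 0) : ℝ × ℝ) := by simp
  rw [this]
  simp only [pd, map_smul, smul_eq_mul]

theorem pd_snd_comp_squeeze {u : ℝ × ℝ → ℝ} (hu : Differentiable ℝ u) :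
    pd (0, 1) (fun p => u (squeeze b hb p)) = fun p => b⁻¹ * pd (0, 1) u (squeeze b hb p) := by
  ext p
  rw [pd_comp_squeeze hb hu]
  have : squeeze b hb (0, 1) = b⁻¹ • ((0, 1) : ℝ × ℝ) := by simp
  rw [this]
  simp only [pd, map_smul, smul_eq_mul]

theorem pd_const_mul {u : ℝ × ℝ → ℝ} (hu : Differentiable ℝ u) (c : ℝ) (w : ℝ × ℝ) :
    pd w (fun p => c * u p) = fun p => c * pd w u p := by
  ext p
  simp only [pd]
  rw [fderiv_const_mul (hu p)]
  rfl

theorem Adm.comp_squeeze {a c : ℝ} {u : ℝ × ℝ → ℝ} (hb0 : 0 < b) (hc : a = b * c)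
    (hu : Adm (Rect a) u) : Adm (Rect c) fun p => u (squeeze b hb p) := by
  refine ⟨hu.1.comp (squeeze b hb).contDiff, hu.2.1.comp_homeomorph (squeeze b hb).toHomeomorph,
    (tsupport_comp_subset_preimage u (squeeze b hb).continuous).trans fun p hp => ?_⟩
  have h : squeeze b hb p ∈ Rect a := hu.2.2 hp
  subst hc
  obtain ⟨⟨h1, h2⟩, h3, h4⟩ := h
  simp only [squeeze_apply] at h1 h2 h3 h4
  refine ⟨⟨pos_of_mul_pos_right h1 hb0.le, lt_of_mul_lt_mul_left h2 hb0.le⟩,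
    pos_of_mul_pos_right h3 (inv_nonneg.2 hb0.le), ?_⟩
  rw [one_div, mul_inv] at h4
  rw [one_div]
  exact lt_of_mul_lt_mul_left h4 (inv_nonneg.2 hb0.le)

variable {Ω : Set (ℝ × ℝ)} {u : ℝ × ℝ → ℝ}

theorem Adm.integral_uxx_sq_comp_squeeze (hu : Adm Ω u) :
    ∫ p, uxx (fun p => u (squeeze b hb p)) p ^ 2 = b ^ 4 * ∫ p, uxx u p ^ 2 := by
  have hd : Differentiable ℝ (fun p => pd (1, 0) u (squeeze b hb p)) :=
    (hu.pd _).differentiable.comp (squeeze b hb).differentiable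
  rw [← integral_const_mul, ← integral_comp_squeeze hb (fun p => _ * uxx u p ^ 2)]
  simp only [uxx]
  rw [pd_fst_comp_squeeze hb hu.differentiable, pd_const_mul hd,
    pd_fst_comp_squeeze hb (hu.pd _).differentiable]
  congr 1 with p
  ring

theorem Adm.integral_uyy_sq_comp_squeeze (hu : Adm Ω u) :
    ∫ p, uyy (fun p => u (squeeze b hb p)) p ^ 2 = (b⁻¹) ^ 4 * ∫ p, uyy u p ^ 2 := by
  have hd : Differentiable ℝ (fun p => pd (0, 1) u (squeeze b hb p)) :=
    (hu.pd _).differentiable.comp (squeeze b hb).differentiable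
  rw [← integral_const_mul, ← integral_comp_squeeze hb (fun p => _ * uyy u p ^ 2)]
  simp only [uyy]
  rw [pd_snd_comp_squeeze hb hu.differentiable, pd_const_mul hd,
    pd_snd_comp_squeeze hb (hu.pd _).differentiable]
  congr 1 with p
  ring

theorem Adm.integral_uxy_sq_comp_squeeze (hu : Adm Ω u) :
    ∫ p, uxy (fun p => u (squeeze b hb p)) p ^ 2 = ∫ p, uxy u p ^ 2 := by
  have hd : Differentiable ℝ (fun p => pd (1, 0) u (squeeze b hb p)) :=
    (hu.pd _).differentiable.comp (squeeze b hb).differentiable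
  rw [← integral_comp_squeeze hb (fun p => uxy u p ^ 2)]
  simp only [uxy]
  rw [pd_fst_comp_squeeze hb hu.differentiable, pd_const_mul hd,
    pd_snd_comp_squeeze hb (hu.pd _).differentiable]
  congr 1 with p
  simp only [mul_inv_cancel_left₀ hb]

end Squeeze

theorem exists_Ioo_of_isCompact {K : Set ℝ} (hK : IsCompact K) (h : K ⊆ Set.Ioo 0 1) :
    ∃ l r : ℝ, 0 < l ∧ l ≤ r ∧ r < 1 ∧ K ⊆ Set.Ioo l r := by
  have hK' : IsCompact (insert (1 / 2) K) := hK.insert _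
  have h' : insert (1 / 2) K ⊆ Set.Ioo (0 : ℝ) 1 := Set.insert_subset (by norm_num) h
  obtain ⟨m, hm, hm'⟩ := hK'.exists_isLeast ⟨_, Set.mem_insert _ _⟩
  obtain ⟨M, hM, hM'⟩ := hK'.exists_isGreatest ⟨_, Set.mem_insert _ _⟩
  have h1 := h' hm
  have h2 := h' hM
  have h3 : m ≤ M := hm' hM
  refine ⟨m / 2, (M + 1) / 2, by linarith [h1.1], by linarith [h1.1, h2.2], by linarith [h2.2],
    fun x hx => ⟨?_, ?_⟩⟩
  · linarith [h1.1, hm' (Set.mem_insert_of_mem _ hx)]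
  · linarith [h2.2, hM' (Set.mem_insert_of_mem _ hx)]

theorem hasDerivAt_fst_slice {u : ℝ × ℝ → ℝ} (hu : Differentiable ℝ u) (x y : ℝ) :
    HasDerivAt (fun x => u (x, y)) (pd (1, 0) u (x, y)) x :=
  (hu (x, y)).hasFDerivAt.comp_hasDerivAt x ((hasDerivAt_id x).prodMk (hasDerivAt_const x y))

theorem hasDerivAt_snd_slice {u : ℝ × ℝ → ℝ} (hu : Differentiable ℝ u) (x y : ℝ) :
    HasDerivAt (fun y => u (x, y)) (pd (0, 1) u (x, y)) y :=
  (hu (x, y)).hasFDerivAt.comp_hasDerivAt y ((hasDerivAt_const y x).prodMk (hasDerivAt_id y))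

theorem integral_prod_nonneg {φ : ℝ × ℝ → ℝ} (hφ : Integrable φ)
    (h : ∀ x, 0 ≤ ∫ y, φ (x, y)) : 0 ≤ ∫ p, φ p := by
  rw [Measure.volume_eq_prod] at hφ ⊢
  rw [integral_prod _ hφ]
  exact integral_nonneg h

theorem integral_prod_nonneg' {φ : ℝ × ℝ → ℝ} (hφ : Integrable φ)
    (h : ∀ y, 0 ≤ ∫ x, φ (x, y)) : 0 ≤ ∫ p, φ p := by
  rw [Measure.volume_eq_prod] at hφ ⊢
  rw [integral_prod_symm _ hφ]
  exact integral_nonneg h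

namespace Adm

variable {u : ℝ × ℝ → ℝ}

theorem pi_sq_mul_integral_uy_sq_le (hu : Adm (Rect 1) u) :
    π ^ 2 * ∫ p, pd (0, 1) u p ^ 2 ≤ ∫ p, uxy u p ^ 2 := by
  have hv := hu.pd (0, 1)
  have hxy : uxy u = pd (1, 0) (pd (0, 1) u) := pd_comm hu.1 _ _
  obtain ⟨l, r, hl, hlr, hr, hK⟩ := exists_Ioo_of_isCompact
    (IsCompact.image hv.2.1 continuous_fst) (by
      rintro _ ⟨p, hp, rfl⟩
      exact (hv.2.2 hp).1)
  have hzero : ∀ {w : ℝ × ℝ → ℝ}, tsupport w ⊆ tsupport (pd (0, 1) u) → ∀ y,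
      ∀ x, x ∉ Set.Ioo l r → w (x, y) = 0 := fun hw y x hx =>
    image_eq_zero_of_notMem_tsupport fun hp => hx (hK ⟨_, hw hp, rfl⟩)
  have h := integral_prod_nonneg' (φ := fun p => uxy u p ^ 2 - π ^ 2 * pd (0, 1) u p ^ 2)
    (hu.uxy.integrable_sq.sub (hv.integrable_sq.const_mul _)) fun y => by
      rw [hxy]
      exact wirtinger hl hlr hr (fun x => hasDerivAt_fst_slice hv.differentiable x y)
        ((hv.pd _).continuous.comp (by fun_prop)) (hzero subset_rfl y)
        (hzero (tsupport_fderiv_apply_subset ℝ _) y)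
  rw [integral_sub hu.uxy.integrable_sq (hv.integrable_sq.const_mul _), integral_const_mul] at h
  linarith

theorem integral_sq_le_of_beamW_pos (hu : Adm (Rect 1) u) {α β : ℝ}
    (hW : ∀ x, 0 < x → x ≤ 1 → 0 < beamW α β x) :
    α ^ 2 * β ^ 2 * ∫ p, u p ^ 2 ≤
      (∫ p, uyy u p ^ 2) + (α ^ 2 - β ^ 2) * ∫ p, pd (0, 1) u p ^ 2 := by
  have hv := hu.pd (0, 1)
  obtain ⟨l, r, hl, hlr, hr, hK⟩ := exists_Ioo_of_isCompact
    (IsCompact.image hu.2.1 continuous_snd) (by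
      rintro _ ⟨p, hp, rfl⟩
      simpa using (hu.2.2 hp).2)
  have hzero : ∀ {w : ℝ × ℝ → ℝ}, tsupport w ⊆ tsupport u → ∀ x,
      ∀ y, y ∉ Set.Ioo l r → w (x, y) = 0 := fun hw x y hy =>
    image_eq_zero_of_notMem_tsupport fun hp => hy (hK ⟨_, hw hp, rfl⟩)
  have hsub : tsupport (pd (0, 1) u) ⊆ tsupport u := tsupport_fderiv_apply_subset ℝ _
  have hi1 := hu.uyy.integrable_sq
  have hi2 := hv.integrable_sq.const_mul (α ^ 2 - β ^ 2)
  have hi3 := hu.integrable_sq.const_mul (α ^ 2 * β ^ 2)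
  have h := integral_prod_nonneg (φ := fun p => uyy u p ^ 2
      + (α ^ 2 - β ^ 2) * pd (0, 1) u p ^ 2 - α ^ 2 * β ^ 2 * u p ^ 2)
    ((hi1.add hi2).sub hi3) fun x =>
      clamped_beam hl hlr hr (fun y => hasDerivAt_snd_slice hu.differentiable x y)
        (fun y => hasDerivAt_snd_slice hv.differentiable x y)
        (hu.uyy.continuous.comp (by fun_prop)) (hzero subset_rfl x)
        (hzero hsub x) (hzero ((tsupport_fderiv_apply_subset ℝ _).trans hsub) x) hW
  rw [integral_sub (f := fun p => uyy u p ^ 2 + (α ^ 2 - β ^ 2) * pd (0, 1) u p ^ 2)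
    (hi1.add hi2) hi3, integral_add hi1 hi2, integral_const_mul, integral_const_mul] at h
  linarith

/-- One second derivative, weighted as for a rectangle of aspect ratio `1.1373`, already forces the
quotient above the level `1298` reached on the square. -/
theorem lower_bound (hu : Adm (Rect 1) u) :
    1298 * ∫ p, u p ^ 2 ≤ 2.1373 * (∫ p, uyy u p ^ 2) + 2 * ∫ p, uxy u p ^ 2 := by
  have h1 := hu.pi_sq_mul_integral_uy_sq_le
  have h2 := hu.integral_sq_le_of_beamW_pos fun x => beamW_pos_unit
  have h3 : 0 ≤ ∫ p, u p ^ 2 := integral_nonneg fun _ => sq_nonneg _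
  have h4 : 0 ≤ ∫ p, pd (0, 1) u p ^ 2 := integral_nonneg fun _ => sq_nonneg _
  have h5 : 9.869 * (∫ p, pd (0, 1) u p ^ 2) ≤ π ^ 2 * ∫ p, pd (0, 1) u p ^ 2 := by
    gcongr
    nlinarith [pi_gt_d4]
  norm_num at *
  linarith

end Adm

section Lam

/-- The Rayleigh quotient of the biharmonic operator. -/
def rayleigh (u : ℝ × ℝ → ℝ) : ℝ := (∫ p, lap u p ^ 2) / ∫ p, u p ^ 2

theorem rayleigh_nonneg (u : ℝ × ℝ → ℝ) : 0 ≤ rayleigh u :=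
  div_nonneg (integral_nonneg fun _ => sq_nonneg _) (integral_nonneg fun _ => sq_nonneg _)

theorem lam1_le {a : ℝ} {u : ℝ × ℝ → ℝ} (hu : Adm (Rect a) u) (h0 : u ≠ 0) :
    lam1 a ≤ rayleigh u :=
  csInf_le ⟨0, by rintro _ ⟨v, -, -, rfl⟩; exact rayleigh_nonneg v⟩ ⟨u, hu, h0, rfl⟩

theorem exists_adm {a : ℝ} (ha : 0 < a) : ∃ u, Adm (Rect a) u ∧ u ≠ 0 := by
  have hopen : IsOpen (Rect a) := isOpen_Ioo.prod isOpen_Ioo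
  have hmem : (a / 2, 1 / a / 2) ∈ Rect a := by
    have : 0 < 1 / a := by positivity
    exact ⟨⟨by linarith, by linarith⟩, by linarith, by linarith⟩
  obtain ⟨u, h1, h2, h3, -, h4⟩ := exists_contDiff_tsupport_subset (n := (⊤ : ℕ∞))
    (hopen.mem_nhds hmem)
  refine ⟨u, ⟨h3, h2, h1⟩, fun h => ?_⟩
  simp [h] at h4

theorem le_lam1 {a c : ℝ} (ha : 0 < a)
    (h : ∀ u, Adm (Rect a) u → u ≠ 0 → c ≤ rayleigh u) : c ≤ lam1 a := by
  obtain ⟨u, hu, h0⟩ := exists_adm ha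
  refine le_csInf ⟨_, u, hu, h0, rfl⟩ ?_
  rintro _ ⟨v, hv, hv0, rfl⟩
  exact h v hv hv0

/-- Transplanting a test function from `R_a` to the unit square. -/
theorem min_le_rayleigh {a : ℝ} (ha : 1.032695 ≤ a) {u : ℝ × ℝ → ℝ} (hu : Adm (Rect a) u)
    (h0 : u ≠ 0) : min (lam1 1 + 0.1373) 1297 ≤ rayleigh u := by
  have ha0 : 0 < a := by norm_num at ha ⊢; linarith
  have hb : a⁻¹ ≠ 0 := inv_ne_zero ha0.ne'
  set w : ℝ × ℝ → ℝ := fun p => u (squeeze a ha0.ne' p) with hw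
  have hwA : Adm (Rect 1) w := hu.comp_squeeze ha0.ne' ha0 (by ring)
  have huw : u = fun p => w (squeeze a⁻¹ hb p) := by
    ext p
    simp [hw, ha0.ne']
  have hw0 : w ≠ 0 := fun h => h0 (by rw [huw, h]; rfl)
  have hN : ∫ p, u p ^ 2 = ∫ p, w p ^ 2 := by
    rw [huw, ← integral_comp_squeeze hb (fun p => w p ^ 2)]
  have hQ : ∫ p, lap u p ^ 2 = (a ^ 4)⁻¹ * (∫ p, uxx w p ^ 2) + a ^ 4 * (∫ p, uyy w p ^ 2)
      + 2 * ∫ p, uxy w p ^ 2 := by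
    rw [hu.integral_lap_sq, huw, hwA.integral_uxx_sq_comp_squeeze,
      hwA.integral_uyy_sq_comp_squeeze, hwA.integral_uxy_sq_comp_squeeze, inv_inv, inv_pow]
  have hpos := hwA.integral_sq_pos hw0
  have hsq : lam1 1 * ∫ p, w p ^ 2 ≤ (∫ p, uxx w p ^ 2) + (∫ p, uyy w p ^ 2)
      + 2 * ∫ p, uxy w p ^ 2 := by
    rw [← hwA.integral_lap_sq]
    exact (le_div_iff₀ hpos).1 (lam1_le hwA hw0)
  have hlow := hwA.lower_bound
  have hX : 0 ≤ ∫ p, uxx w p ^ 2 := integral_nonneg fun _ => sq_nonneg _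
  have hY : 0 ≤ ∫ p, uyy w p ^ 2 := integral_nonneg fun _ => sq_nonneg _
  have ht : 1.1373 ≤ a ^ 4 := by
    have := pow_le_pow_left₀ (by norm_num) ha 4
    norm_num at this ⊢
    linarith
  rw [rayleigh, hN, hQ, le_div_iff₀ hpos]
  generalize (∫ p, uxx w p ^ 2) = X at *
  generalize (∫ p, uyy w p ^ 2) = Y at *
  generalize (∫ p, uxy w p ^ 2) = Z at *
  generalize (∫ p, w p ^ 2) = N at *
  generalize a ^ 4 = t at *
  have ht0 : 0 < t := by norm_num at ht; linarith
  set x := t⁻¹ * X with hx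
  have hXx : X = t * x := by rw [hx, mul_inv_cancel_left₀ ht0.ne']
  rcases le_or_gt N (Y - x) with h | h
  · calc min (lam1 1 + 0.1373) 1297 * N ≤ (lam1 1 + 0.1373) * N := by
          gcongr
          exact min_le_left _ _
      _ ≤ x + t * Y + 2 * Z := by
          norm_num at *
          nlinarith
  · calc min (lam1 1 + 0.1373) 1297 * N ≤ 1297 * N := by
          gcongr
          exact min_le_right _ _
      _ ≤ x + t * Y + 2 * Z := by
          norm_num at *
          nlinarith

end Lam

section TestFunction

/-- A smooth function that agrees with `r²` for `r ≥ 2` and vanishes for `r ≤ 1`. -/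
def cutSq (r : ℝ) : ℝ := r ^ 2 * smoothTransition (r - 1)

theorem contDiff_cutSq : ContDiff ℝ (⊤ : ℕ∞) cutSq :=
  (contDiff_id.pow 2).mul (smoothTransition.contDiff.comp (contDiff_id.sub contDiff_const))

theorem contDiff_deriv_cutSq : ContDiff ℝ (⊤ : ℕ∞) (deriv cutSq) :=
  (contDiff_infty_iff_deriv.1 contDiff_cutSq).2

theorem continuous_deriv_deriv_cutSq : Continuous (deriv (deriv cutSq)) :=
  contDiff_deriv_cutSq.continuous_deriv (by simp)

theorem hasDerivAt_cutSq (r : ℝ) : HasDerivAt cutSq (deriv cutSq r) r :=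
  (contDiff_cutSq.differentiable (by simp) r).hasDerivAt

theorem hasDerivAt_deriv_cutSq (r : ℝ) :
    HasDerivAt (deriv cutSq) (deriv (deriv cutSq) r) r :=
  (contDiff_deriv_cutSq.differentiable (by simp) r).hasDerivAt

theorem cutSq_of_le_one {r : ℝ} (h : r ≤ 1) : cutSq r = 0 := by
  rw [cutSq, smoothTransition.zero_of_nonpos (by linarith), mul_zero]

theorem cutSq_of_two_le {r : ℝ} (h : 2 ≤ r) : cutSq r = r ^ 2 := by
  rw [cutSq, smoothTransition.one_of_one_le (by linarith), mul_one]

theorem abs_cutSq_le (r : ℝ) : |cutSq r| ≤ r ^ 2 := by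
  rw [cutSq, abs_of_nonneg (mul_nonneg (sq_nonneg r) (smoothTransition.nonneg _))]
  exact mul_le_of_le_one_right (sq_nonneg r) (smoothTransition.le_one _)

theorem deriv_cutSq_of_lt_one {r : ℝ} (h : r < 1) : deriv cutSq r = 0 := by
  have : cutSq =ᶠ[nhds r] fun _ => 0 := by
    filter_upwards [eventually_lt_nhds h] with s hs using cutSq_of_le_one hs.le
  rw [this.deriv_eq, deriv_const]

theorem deriv_cutSq_of_two_lt {r : ℝ} (h : 2 < r) : deriv cutSq r = 2 * r := by
  have : cutSq =ᶠ[nhds r] fun s => s ^ 2 := by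
    filter_upwards [eventually_gt_nhds h] with s hs using cutSq_of_two_le hs.le
  rw [this.deriv_eq]
  simp

theorem deriv_deriv_cutSq_of_lt_one {r : ℝ} (h : r < 1) : deriv (deriv cutSq) r = 0 := by
  have : deriv cutSq =ᶠ[nhds r] fun _ => 0 := by
    filter_upwards [eventually_lt_nhds h] with s hs using deriv_cutSq_of_lt_one hs
  rw [this.deriv_eq, deriv_const]

theorem deriv_deriv_cutSq_of_two_lt {r : ℝ} (h : 2 < r) : deriv (deriv cutSq) r = 2 := by
  have : deriv cutSq =ᶠ[nhds r] fun s => 2 * s := by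
    filter_upwards [eventually_gt_nhds h] with s hs using deriv_cutSq_of_two_lt hs
  rw [this.deriv_eq]
  simp

theorem exists_bound_cutSq : ∃ C : ℝ, 0 ≤ C ∧ (∀ r, |deriv (deriv cutSq) r| ≤ C) ∧
    ∀ r, |deriv cutSq r| ≤ C * |r| := by
  obtain ⟨C, hC⟩ := isCompact_Icc.exists_bound_of_continuousOn (s := Set.Icc (1 : ℝ) 2)
    continuous_deriv_deriv_cutSq.continuousOn
  have h2 : ∀ r, |deriv (deriv cutSq) r| ≤ max C 2 := fun r => by
    rcases lt_or_ge r 1 with h | h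
    · simp [deriv_deriv_cutSq_of_lt_one h]
    rcases lt_or_ge 2 r with h' | h'
    · simp [deriv_deriv_cutSq_of_two_lt h']
    exact (hC r ⟨h, h'⟩).trans (le_max_left _ _)
  refine ⟨max C 2, by simp, h2, fun r => ?_⟩
  have h := convex_univ.norm_image_sub_le_of_norm_hasDerivWithin_le
    (fun x _ => (hasDerivAt_deriv_cutSq x).hasDerivWithinAt) (fun x _ => h2 x)
    (Set.mem_univ 0) (Set.mem_univ r)
  simpa [deriv_cutSq_of_lt_one zero_lt_one] using h

/-- A smooth approximation of `x² (1 - x)²` supported in `(0, 1)`. -/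
def profile (c x : ℝ) : ℝ := cutSq (c * (x * (1 - x))) / c ^ 2

def profile' (c x : ℝ) : ℝ := deriv cutSq (c * (x * (1 - x))) * (1 - 2 * x) / c

def profile'' (c x : ℝ) : ℝ :=
  deriv (deriv cutSq) (c * (x * (1 - x))) * (1 - 2 * x) ^ 2
    - 2 * deriv cutSq (c * (x * (1 - x))) / c

theorem contDiff_profile (c : ℝ) : ContDiff ℝ (⊤ : ℕ∞) (profile c) :=
  (contDiff_cutSq.comp (contDiff_const.mul
    (contDiff_id.mul (contDiff_const.sub contDiff_id)))).div_const _

theorem continuous_profile'' (c : ℝ) : Continuous (profile'' c) := by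
  have h1 := continuous_deriv_deriv_cutSq
  have h2 := contDiff_deriv_cutSq.continuous
  unfold profile''
  fun_prop

section

variable {c : ℝ} (hc : 0 < c) (x : ℝ)

theorem hasDerivAt_mul_quadratic :
    HasDerivAt (fun x : ℝ => c * (x * (1 - x))) (c * (1 - 2 * x)) x := by
  refine (((hasDerivAt_id x).mul ((hasDerivAt_id x).const_sub 1)).const_mul c).congr_deriv ?_
  simp only [id]
  ring

include hc

theorem hasDerivAt_profile : HasDerivAt (profile c) (profile' c x) x := by
  refine (((hasDerivAt_cutSq _).comp x (hasDerivAt_mul_quadratic x)).div_const _).congr_deriv ?_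
  rw [profile']
  field_simp

theorem hasDerivAt_profile' : HasDerivAt (profile' c) (profile'' c x) x := by
  refine ((((hasDerivAt_deriv_cutSq _).comp x (hasDerivAt_mul_quadratic x)).mul
    (((hasDerivAt_id x).const_mul 2).const_sub 1)).div_const _).congr_deriv ?_
  rw [profile'']
  simp only [Function.comp, id]
  field_simp
  ring

variable {x}

theorem profile_eq_zero (hx : x ∉ Set.Ioo 0 1) : profile c x = 0 := by
  have : x * (1 - x) ≤ 0 := by
    by_contra! h
    exact hx ⟨by nlinarith, by nlinarith⟩
  rw [profile, cutSq_of_le_one (by nlinarith), zero_div]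

theorem profile''_eq_zero (hx : x ∉ Set.Ioo 0 1) : profile'' c x = 0 := by
  have : x * (1 - x) ≤ 0 := by
    by_contra! h
    exact hx ⟨by nlinarith, by nlinarith⟩
  have : c * (x * (1 - x)) < 1 := by nlinarith
  rw [profile'', deriv_cutSq_of_lt_one this, deriv_deriv_cutSq_of_lt_one this]
  simp

theorem abs_profile_le (hx : x ∈ Set.Icc 0 1) : |profile c x| ≤ 1 := by
  rw [profile, abs_div, abs_of_pos (pow_pos hc 2), div_le_one (pow_pos hc 2)]
  refine (abs_cutSq_le _).trans ?_
  rw [mul_pow]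
  have h0 : 0 ≤ x * (1 - x) := mul_nonneg hx.1 (by linarith [hx.2])
  have h1 : x * (1 - x) ≤ 1 := by nlinarith [sq_nonneg x, hx.2]
  exact mul_le_of_le_one_right (sq_nonneg c) (pow_le_one₀ h0 h1)

theorem abs_profile''_le {C : ℝ} (hC : ∀ r, |deriv (deriv cutSq) r| ≤ C)
    (hC' : ∀ r, |deriv cutSq r| ≤ C * |r|) (hx : x ∈ Set.Icc 0 1) : |profile'' c x| ≤ 3 * C := by
  have hC0 : 0 ≤ C := (abs_nonneg _).trans (hC 0)
  have h0 : 0 ≤ x * (1 - x) := mul_nonneg hx.1 (by linarith [hx.2])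
  have h1 : x * (1 - x) ≤ 1 := by nlinarith [sq_nonneg x, hx.2]
  have h2 : |deriv (deriv cutSq) (c * (x * (1 - x))) * (1 - 2 * x) ^ 2| ≤ C * 1 := by
    rw [abs_mul, abs_of_nonneg (sq_nonneg (1 - 2 * x))]
    exact mul_le_mul (hC _) (by nlinarith) (sq_nonneg _) hC0
  have h3 : |2 * deriv cutSq (c * (x * (1 - x))) / c| ≤ 2 * C := by
    rw [abs_div, abs_mul, abs_of_pos hc, abs_two, div_le_iff₀ hc]
    have := hC' (c * (x * (1 - x)))
    rw [abs_of_nonneg (mul_nonneg hc.le h0)] at this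
    have h4 : C * (c * (x * (1 - x))) ≤ C * (c * 1) := by gcongr
    linarith
  rw [profile'']
  linarith [abs_sub (deriv (deriv cutSq) (c * (x * (1 - x))) * (1 - 2 * x) ^ 2)
    (2 * deriv cutSq (c * (x * (1 - x))) / c)]

end

theorem eventually_two_lt_mul {x : ℝ} (hx : x ∈ Set.Ioo (0 : ℝ) 1) :
    ∀ᶠ c : ℝ in atTop, 0 < c ∧ 2 < c * (x * (1 - x)) := by
  have hq : 0 < x * (1 - x) := mul_pos hx.1 (by linarith [hx.2])
  filter_upwards [eventually_gt_atTop 0, eventually_gt_atTop (2 / (x * (1 - x)))] with c h1 h2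
  exact ⟨h1, (div_lt_iff₀ hq).1 h2⟩

theorem eventually_profile_eq {x : ℝ} (hx : x ∈ Set.Ioo (0 : ℝ) 1) :
    ∀ᶠ c : ℝ in atTop, profile c x = (x * (1 - x)) ^ 2 := by
  filter_upwards [eventually_two_lt_mul hx] with c ⟨h1, h2⟩
  rw [profile, cutSq_of_two_le h2.le]
  field_simp

theorem eventually_profile''_eq {x : ℝ} (hx : x ∈ Set.Ioo (0 : ℝ) 1) :
    ∀ᶠ c : ℝ in atTop, profile'' c x = 2 - 12 * x + 12 * x ^ 2 := by
  filter_upwards [eventually_two_lt_mul hx] with c ⟨h1, h2⟩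
  rw [profile'', deriv_cutSq_of_two_lt h2, deriv_deriv_cutSq_of_two_lt h2]
  field_simp
  ring

theorem tendsto_integral_mul {A B : ℝ → ℝ → ℝ} {A₀ B₀ : ℝ → ℝ} {M : ℝ}
    (hA : ∀ c, Continuous (A c)) (hB : ∀ c, Continuous (B c))
    (hA0 : ∀ c, 0 < c → ∀ x, x ∉ Set.Ioo 0 1 → A c x = 0)
    (hAM : ∀ c, 0 < c → ∀ x ∈ Set.Icc 0 1, |A c x| ≤ M)
    (hBM : ∀ c, 0 < c → ∀ x ∈ Set.Icc 0 1, |B c x| ≤ M)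
    (hA₀ : ∀ x ∈ Set.Ioo (0 : ℝ) 1, ∀ᶠ c in atTop, A c x = A₀ x)
    (hB₀ : ∀ x ∈ Set.Ioo (0 : ℝ) 1, ∀ᶠ c in atTop, B c x = B₀ x) :
    Tendsto (fun c => ∫ x, A c x * B c x) atTop (nhds (∫ x in (0 : ℝ)..1, A₀ x * B₀ x)) := by
  have h : Tendsto (fun c => ∫ x in (0 : ℝ)..1, A c x * B c x) atTop
      (nhds (∫ x in (0 : ℝ)..1, A₀ x * B₀ x)) := by
    apply intervalIntegral.tendsto_integral_filter_of_dominated_convergence (fun _ => M * M)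
    · exact Eventually.of_forall fun c => ((hA c).mul (hB c)).aestronglyMeasurable
    · filter_upwards [eventually_gt_atTop 0] with c hc
      refine Eventually.of_forall fun x hx => ?_
      rw [Set.uIoc_of_le zero_le_one] at hx
      have hx' := Set.Ioc_subset_Icc_self hx
      rw [norm_mul]
      exact mul_le_mul (hAM c hc x hx') (hBM c hc x hx') (norm_nonneg _)
        ((abs_nonneg _).trans (hAM c hc x hx'))
    · exact intervalIntegrable_const
    · filter_upwards [compl_mem_ae_iff.2 (measure_singleton (1 : ℝ))] with x hx1 hx
      rw [Set.uIoc_of_le zero_le_one] at hx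
      have hx' : x ∈ Set.Ioo (0 : ℝ) 1 := ⟨hx.1, lt_of_le_of_ne hx.2 hx1⟩
      refine tendsto_const_nhds.congr' ?_
      filter_upwards [hA₀ x hx', hB₀ x hx'] with c h1 h2
      rw [h1, h2]
  refine h.congr' ?_
  filter_upwards [eventually_gt_atTop 0] with c hc
  apply intervalIntegral.integral_eq_integral_of_support_subset
  intro x hx
  by_contra hx'
  exact hx (by simp [hA0 c hc x fun h => hx' (Set.Ioo_subset_Ioc_self h)])

/-- The tensor product of two profiles. -/
def testFun (c : ℝ) (p : ℝ × ℝ) : ℝ := profile c p.1 * profile c p.2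

variable {c : ℝ}

theorem adm_testFun (hc : 0 < c) : Adm (Rect 1) (testFun c) := by
  set K : Set ℝ := {x | 1 ≤ c * (x * (1 - x))} with hK
  have hKc : IsClosed K := isClosed_le continuous_const (by fun_prop)
  have hK01 : K ⊆ Set.Ioo 0 1 := fun x hx => by
    have hx : 1 ≤ c * (x * (1 - x)) := hx
    have : 0 < x * (1 - x) := pos_of_mul_pos_right (by linarith) hc.le
    exact ⟨by nlinarith, by nlinarith⟩
  have hKk : IsCompact K :=
    isCompact_Icc.of_isClosed_subset hKc (hK01.trans Set.Ioo_subset_Icc_self)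
  have hp : ∀ x, x ∉ K → profile c x = 0 := fun x hx => by
    have hx : c * (x * (1 - x)) < 1 := not_le.1 hx
    rw [profile, cutSq_of_le_one hx.le, zero_div]
  have hsub : tsupport (testFun c) ⊆ K ×ˢ K := by
    refine closure_minimal (fun p h => ?_) (hKc.prod hKc)
    by_contra hn
    rw [Set.mem_prod, not_and_or] at hn
    rcases hn with hn | hn <;> exact h (by simp [testFun, hp _ hn])
  refine ⟨((contDiff_profile c).comp contDiff_fst).mul ((contDiff_profile c).comp contDiff_snd),
    (hKk.prod hKk).of_isClosed_subset (isClosed_tsupport _) hsub,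
    hsub.trans fun p h => ⟨hK01 h.1, ?_⟩⟩
  simpa using hK01 h.2

theorem lap_testFun (hc : 0 < c) (p : ℝ × ℝ) :
    lap (testFun c) p = profile'' c p.1 * profile c p.2 + profile c p.1 * profile'' c p.2 := by
  have h := adm_testFun hc
  have h1 : pd (1, 0) (testFun c) = fun p => profile' c p.1 * profile c p.2 := by
    ext ⟨x, y⟩
    exact (hasDerivAt_fst_slice h.differentiable x y).unique
      ((hasDerivAt_profile hc x).mul_const (profile c y))
  have h2 : pd (0, 1) (testFun c) = fun p => profile c p.1 * profile' c p.2 := by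
    ext ⟨x, y⟩
    exact (hasDerivAt_snd_slice h.differentiable x y).unique
      ((hasDerivAt_profile hc y).const_mul (profile c x))
  obtain ⟨x, y⟩ := p
  have hd1 := (h.pd (1, 0)).differentiable
  have hd2 := (h.pd (0, 1)).differentiable
  rw [lap, uxx, uyy]
  rw [h1] at hd1 ⊢
  rw [h2] at hd2 ⊢
  congr 1
  · exact (hasDerivAt_fst_slice hd1 x y).unique
      ((hasDerivAt_profile' hc x).mul_const (profile c y))
  · exact (hasDerivAt_snd_slice hd2 x y).unique
      ((hasDerivAt_profile' hc y).const_mul (profile c x))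

theorem integral_testFun_sq :
    ∫ p, testFun c p ^ 2 = (∫ x, profile c x * profile c x) ^ 2 := by
  rw [sq (∫ x, profile c x * profile c x), Measure.volume_eq_prod, ← integral_prod_mul]
  congr 1 with p
  simp only [testFun]
  ring

theorem integrable_of_eq_zero {A : ℝ → ℝ} (hA : Continuous A)
    (h0 : ∀ x, x ∉ Set.Ioo 0 1 → A x = 0) : Integrable A :=
  hA.integrable_of_hasCompactSupport
    (HasCompactSupport.intro isCompact_Icc fun x hx =>
      h0 x fun h => hx (Set.Ioo_subset_Icc_self h))

theorem integral_lap_testFun_sq (hc : 0 < c) : ∫ p, lap (testFun c) p ^ 2 =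
    2 * ((∫ x, profile'' c x * profile'' c x) * ∫ x, profile c x * profile c x)
      + 2 * (∫ x, profile c x * profile'' c x) ^ 2 := by
  have c0 := (contDiff_profile c).continuous
  have c2 := continuous_profile'' c
  have i00 : Integrable fun x => profile c x * profile c x :=
    integrable_of_eq_zero (by fun_prop) fun x hx => by simp [profile_eq_zero hc hx]
  have i02 : Integrable fun x => profile c x * profile'' c x :=
    integrable_of_eq_zero (by fun_prop) fun x hx => by simp [profile_eq_zero hc hx]
  have i22 : Integrable fun x => profile'' c x * profile'' c x :=
    integrable_of_eq_zero (by fun_prop) fun x hx => by simp [profile''_eq_zero hc hx]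
  have e : ∀ p : ℝ × ℝ, lap (testFun c) p ^ 2 =
      (profile'' c p.1 * profile'' c p.1) * (profile c p.2 * profile c p.2)
      + (profile c p.1 * profile c p.1) * (profile'' c p.2 * profile'' c p.2)
      + 2 * ((profile c p.1 * profile'' c p.1) * (profile c p.2 * profile'' c p.2)) := fun p => by
    rw [lap_testFun hc]
    ring
  simp_rw [e]
  rw [Measure.volume_eq_prod, integral_add
    (f := fun p : ℝ × ℝ =>
      profile'' c p.1 * profile'' c p.1 * (profile c p.2 * profile c p.2)
      + profile c p.1 * profile c p.1 * (profile'' c p.2 * profile'' c p.2))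
    ((i22.mul_prod i00).add (i00.mul_prod i22))
    ((i02.mul_prod i02).const_mul 2), integral_add (i22.mul_prod i00) (i00.mul_prod i22),
    integral_const_mul, integral_prod_mul (fun x => profile'' c x * profile'' c x)
      (fun x => profile c x * profile c x),
    integral_prod_mul (fun x => profile c x * profile c x)
      (fun x => profile'' c x * profile'' c x),
    integral_prod_mul (fun x => profile c x * profile'' c x)
      (fun x => profile c x * profile'' c x)]
  ring

theorem lam1_mul_integral_le {a : ℝ} {u : ℝ × ℝ → ℝ} (hu : Adm (Rect a) u) :
    lam1 a * ∫ p, u p ^ 2 ≤ ∫ p, lap u p ^ 2 := by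
  by_cases h0 : u = 0
  · simpa [h0] using integral_nonneg fun p => sq_nonneg (lap 0 p)
  · exact (le_div_iff₀ (hu.integral_sq_pos h0)).1 (lam1_le hu h0)

theorem lam1_one_le : lam1 1 ≤ 1296 := by
  obtain ⟨C, hC0, hC, hC'⟩ := exists_bound_cutSq
  have b0 : ∀ c : ℝ, 0 < c → ∀ x ∈ Set.Icc (0 : ℝ) 1, |profile c x| ≤ 3 * C + 1 :=
    fun c hc x hx => (abs_profile_le hc hx).trans (by linarith)
  have b2 : ∀ c : ℝ, 0 < c → ∀ x ∈ Set.Icc (0 : ℝ) 1, |profile'' c x| ≤ 3 * C + 1 :=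
    fun c hc x hx => (abs_profile''_le hc hC hC' hx).trans (by linarith)
  have c0 := fun c => (contDiff_profile c).continuous
  have z0 := fun c (hc : 0 < c) x hx => profile_eq_zero (x := x) hc hx
  have z2 := fun c (hc : 0 < c) x hx => profile''_eq_zero (x := x) hc hx
  have t00 := tendsto_integral_mul c0 c0 z0 b0 b0 (fun x => eventually_profile_eq)
    (fun x => eventually_profile_eq)
  have t02 := tendsto_integral_mul c0 continuous_profile'' z0 b0 b2
    (fun x => eventually_profile_eq) (fun x => eventually_profile''_eq)
  have t22 := tendsto_integral_mul continuous_profile'' continuous_profile'' z2 b2 b2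
    (fun x => eventually_profile''_eq) (fun x => eventually_profile''_eq)
  have e00 : ∫ x in (0 : ℝ)..1, (x * (1 - x)) ^ 2 * (x * (1 - x)) ^ 2 = 1 / 630 := by
    have : ∀ x : ℝ, (x * (1 - x)) ^ 2 * (x * (1 - x)) ^ 2 =
        x ^ 4 - 4 * x ^ 5 + 6 * x ^ 6 - 4 * x ^ 7 + x ^ 8 := fun x => by ring
    simp_rw [this]
    simp (disch := exact Continuous.intervalIntegrable (by fun_prop) _ _) only
      [intervalIntegral.integral_add, intervalIntegral.integral_sub,
      intervalIntegral.integral_const_mul, integral_pow]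
    norm_num
  have e02 : ∫ x in (0 : ℝ)..1, (x * (1 - x)) ^ 2 * (2 - 12 * x + 12 * x ^ 2) = -2 / 105 := by
    have : ∀ x : ℝ, (x * (1 - x)) ^ 2 * (2 - 12 * x + 12 * x ^ 2) =
        2 * x ^ 2 - 16 * x ^ 3 + 38 * x ^ 4 - 36 * x ^ 5 + 12 * x ^ 6 := fun x => by ring
    simp_rw [this]
    simp (disch := exact Continuous.intervalIntegrable (by fun_prop) _ _) only
      [intervalIntegral.integral_add, intervalIntegral.integral_sub,
      intervalIntegral.integral_const_mul, integral_pow]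
    norm_num
  have e22 : ∫ x in (0 : ℝ)..1, (2 - 12 * x + 12 * x ^ 2) * (2 - 12 * x + 12 * x ^ 2) =
      4 / 5 := by
    have : ∀ x : ℝ, (2 - 12 * x + 12 * x ^ 2) * (2 - 12 * x + 12 * x ^ 2) =
        4 * x ^ 0 - 48 * x ^ 1 + 192 * x ^ 2 - 288 * x ^ 3 + 144 * x ^ 4 := fun x => by ring
    simp_rw [this]
    simp (disch := exact Continuous.intervalIntegrable (by fun_prop) _ _) only
      [intervalIntegral.integral_add, intervalIntegral.integral_sub,
      intervalIntegral.integral_const_mul, integral_pow]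
    norm_num
  rw [e00] at t00
  rw [e02] at t02
  rw [e22] at t22
  have h := le_of_tendsto_of_tendsto ((t00.pow 2).const_mul (lam1 1))
    (((t22.mul t00).const_mul 2).add ((t02.pow 2).const_mul 2)) (by
      filter_upwards [eventually_gt_atTop 0] with c hc
      rw [← integral_testFun_sq, ← integral_lap_testFun_sq hc]
      exact lam1_mul_integral_le (adm_testFun hc))
  norm_num at h
  linarith

end TestFunction

theorem lam1_one_lt {a : ℝ} (ha : 1.032695 ≤ a) : lam1 1 < lam1 a := by
  have h1 := lam1_one_le
  have ha0 : 0 < a := by norm_num at ha ⊢; linarith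
  refine lt_of_lt_of_le (lt_min (lt_add_of_pos_right _ (by norm_num)) (by linarith))
    (le_lam1 ha0 fun u => min_le_rayleigh ha)

/-- For every `a ≥ 1.032695`, `λ₁(a) > λ₁(1)`; consequently any minimiser of
`λ₁` among rectangles of unit area lies in `[1, 1.032695)`. -/
theorem first_eigenvalue_large_far_from_square :
    (∀ a : ℝ, 1.032695 ≤ a → lam1 1 < lam1 a) ∧
    (∀ astar : ℝ, 1 ≤ astar → (∀ a : ℝ, 1 ≤ a → lam1 astar ≤ lam1 a) →
      astar < 1.032695) := by
  refine ⟨fun a => lam1_one_lt, fun astar _ hmin => ?_⟩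
  by_contra! h
  exact (lam1_one_lt h).not_ge (hmin 1 le_rfl)
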